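/- (Existence and uniqueness of the maximal right divisor.) For every β ∈ B_n^{+*} and every subset I ⊆ {1, …, n}, there exists a unique β' ∈ B_I^{+*} such that β β'^{−1} ∈ B_n^{+*}, and such that for every β'' ∈ B_I^{+*} with β β''^{−1} ∈ B_n^{+*} one has β' β''^{−1} ∈ B_I^{+*}. -/

import Mathlib

/-!
A homogeneous presentation with exactly one relation `p * a = q * b` for every pair of letters `a`,
`b` proposes a left lcm for each pair. By Garside's argument these really are lcms as soon as every
triple of letters satisfies the cube condition. The Birman–Ko–Lee presentation of the dual braid
monoid is of this kind, and since three chords involve at most six points its cube condition is a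
finite check. So elements with a common left multiple have a left lcm, which stays within the points
that they involve, and a right divisor of `β` of maximal length supported on `I` is a left multiple
of all the others: replacing it by its lcm with another one would otherwise make it longer.

To carry this from the presented monoid `M` to the submonoid of `B_n`, one has to know that `M`
embeds in `B_n`. It is cancellative, and every element right divides a power of the Garside element,
so by Ore's theorem `M` embeds in a group `G`. The Birman–Ko–Lee relations in `G` imply the braid
relations, so that `M → G` factors through `B_n`.
-/

/-- The defining relations of the braid group on `n` strands, inside the free group on
generators indexed by `ℕ`.  Generator `i` corresponds to the Artin generator `σ_i`
(for `1 ≤ i ≤ n-1`); generators with index `0` or `≥ n` are killed. -/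
def braidRels (n : ℕ) : Set (FreeGroup ℕ) :=
  {r | (∃ i j : ℕ, 1 ≤ i ∧ i + 2 ≤ j ∧ j ≤ n - 1 ∧
          r = FreeGroup.of i * FreeGroup.of j * (FreeGroup.of i)⁻¹ * (FreeGroup.of j)⁻¹) ∨
       (∃ i : ℕ, 1 ≤ i ∧ i + 1 ≤ n - 1 ∧
          r = FreeGroup.of i * FreeGroup.of (i+1) * FreeGroup.of i *
              (FreeGroup.of (i+1) * FreeGroup.of i * FreeGroup.of (i+1))⁻¹) ∨
       (∃ i : ℕ, (i = 0 ∨ n ≤ i) ∧ r = FreeGroup.of i)}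

/-- The braid group `B_n` on `n` strands. -/
abbrev Braid (n : ℕ) := PresentedGroup (braidRels n)

/-- The Artin generator `σ_i` of `B_n`. -/
def genσ (n i : ℕ) : Braid n := PresentedGroup.of i

/-- The band generator `a_{i,j} = (σ_{j-1} ⋯ σ_{i+1}) σ_i (σ_{i+1}⁻¹ ⋯ σ_{j-1}⁻¹)`. -/
def band (n i j : ℕ) : Braid n :=
  (((List.range' (i+1) (j-1-i)).reverse.map (genσ n)).prod) * genσ n i *
    (((List.range' (i+1) (j-1-i)).reverse.map (genσ n)).prod)⁻¹

/-- The dual braid monoid `B_n^{+*}`: the submonoid of `B_n` generated by the band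
generators `a_{i,j}`, `1 ≤ i < j ≤ n`. -/
def dualMonoid (n : ℕ) : Submonoid (Braid n) :=
  Submonoid.closure {x | ∃ i j : ℕ, 1 ≤ i ∧ i < j ∧ j ≤ n ∧ x = band n i j}

/-- The submonoid `B_I^{+*}` generated by the band generators `a_{i,j}` with `i, j ∈ I`. -/
def dualMonoidOn (n : ℕ) (I : Set ℕ) : Submonoid (Braid n) :=
  Submonoid.closure {x | ∃ i j : ℕ, i ∈ I ∧ j ∈ I ∧ 1 ≤ i ∧ i < j ∧ j ≤ n ∧ x = band n i j}

/-- Evaluation of a word in the letters `σ_i^{±1}` (a letter is a pair of an index and a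
sign, `true` meaning positive). -/
def evalWord (n : ℕ) (w : List (ℕ × Bool)) : Braid n :=
  (w.map (fun p => if p.2 then genσ n p.1 else (genσ n p.1)⁻¹)).prod

/-- `γ` is `σ_i`-positive: it is represented by a word in the letters `σ_1^{±1}, …,
σ_{n-1}^{±1}` containing at least one `σ_i`, no `σ_i⁻¹`, and no `σ_j^{±1}` with `j < i`. -/
def SigmaPositive (n i : ℕ) (γ : Braid n) : Prop :=
  ∃ w : List (ℕ × Bool),
    (∀ p ∈ w, 1 ≤ p.1 ∧ p.1 ≤ n - 1) ∧
    (i, true) ∈ w ∧ (i, false) ∉ w ∧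
    (∀ p ∈ w, i ≤ p.1) ∧
    evalWord n w = γ

/-- The Dehornoy ordering on `B_n`: `α <_D β` iff `α⁻¹β` is `σ_i`-positive for some `i`. -/
def dehornoyLt (n : ℕ) (α β : Braid n) : Prop :=
  ∃ i : ℕ, 1 ≤ i ∧ i ≤ n - 1 ∧ SigmaPositive n i (α⁻¹ * β)

/-! ### Left complements -/

/-- `p * x = q * y` is a left lcm of `x` and `y`, as far as common left multiples lying in `P` are
concerned.  Restricting to `P` is what lets lcms be constructed by induction on the length. -/
structure IsLeftLcmOn {M : Type*} [Monoid M] (P : Set M) (x y p q : M) : Prop where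
  mul_eq_mul : p * x = q * y
  exists_eq_mul {u v : M} : u * x ∈ P → u * x = v * y → ∃ z, u = z * p ∧ v = z * q

namespace IsLeftLcmOn

variable {M : Type*} [Monoid M] {P : Set M} {x y p q x' y' p' q' : M}

theorem symm (h : IsLeftLcmOn P x y p q) : IsLeftLcmOn P y x q p where
  mul_eq_mul := h.mul_eq_mul.symm
  exists_eq_mul huy huv := by
    obtain ⟨z, hv, hu⟩ := h.exists_eq_mul (huv ▸ huy) huv.symm
    exact ⟨z, hu, hv⟩

theorem one_left (P : Set M) (y : M) : IsLeftLcmOn P 1 y y 1 where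
  mul_eq_mul := by simp
  exists_eq_mul {_ v} _ huv := ⟨v, by simpa using huv, by simp⟩

theorem mul_left (hP : ∀ u v, u * v ∈ P → u ∈ P) (h : IsLeftLcmOn P x y p q)
    (h' : IsLeftLcmOn P x' p p' q') : IsLeftLcmOn P (x' * x) y p' (q' * q) where
  mul_eq_mul := by rw [← mul_assoc, h'.mul_eq_mul, mul_assoc, h.mul_eq_mul, mul_assoc]
  exists_eq_mul {u v} hu huv := by
    rw [← mul_assoc] at hu huv
    obtain ⟨z, hz, rfl⟩ := h.exists_eq_mul hu huv
    obtain ⟨w, hw, rfl⟩ := h'.exists_eq_mul (hP _ _ hu) hz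
    exact ⟨w, hw, mul_assoc _ _ _⟩

theorem mul_right (hP : ∀ u v, u * v ∈ P → u ∈ P) (h : IsLeftLcmOn P x y p q)
    (h' : IsLeftLcmOn P q y' p' q') : IsLeftLcmOn P x (y' * y) (p' * p) q' :=
  (h.symm.mul_left hP h'.symm).symm

end IsLeftLcmOn

/-- A left complement on an alphabet `S`: the data of a presentation in which each pair of letters
`a`, `b` has the single relation `a ⬝ compl a b = b ⬝ compl b a`, between words of equal length.
As common *left* multiples are wanted, words are lists read from right to left throughout. -/
structure LeftComplement (S : Type*) where
  compl : S → S → List S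
  compl_self (a : S) : compl a a = []
  length_compl_comm (a b : S) : (compl a b).length = (compl b a).length

namespace LeftComplement

variable {S T : Type*} (C : LeftComplement S)

/-- The defining relations of the monoid presented by a left complement. -/
inductive Rels : FreeMonoid S → FreeMonoid S → Prop
  | complement (a b : S) : Rels (.ofList (C.compl a b).reverse * .of a)
      (.ofList (C.compl b a).reverse * .of b)

/-- The monoid presented by a left complement. -/
abbrev Presented := PresentedMonoid C.Rels

/-- The element of the presented monoid represented by a word, read from right to left. -/
def eval (u : List S) : C.Presented := PresentedMonoid.mk C.Rels (.ofList u.reverse)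

/-- A letter, as an element of the presented monoid. -/
def of (a : S) : C.Presented := PresentedMonoid.of C.Rels a

@[simp] theorem eval_nil : C.eval [] = 1 := rfl

theorem eval_append (u v : List S) : C.eval (u ++ v) = C.eval v * C.eval u := by
  simp [eval, FreeMonoid.ofList_append]

@[simp] theorem eval_singleton (a : S) : C.eval [a] = C.of a := rfl

theorem eval_cons (a : S) (u : List S) : C.eval (a :: u) = C.eval u * C.of a :=
  C.eval_append [a] u

theorem eval_surjective : Function.Surjective C.eval := fun x ↦ by
  obtain ⟨w, rfl⟩ := PresentedMonoid.surjective_mk x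
  exact ⟨w.toList.reverse, by simp [eval]⟩

theorem eval_compl_mul_of (a b : S) :
    C.eval (C.compl a b) * C.of a = C.eval (C.compl b a) * C.of b :=
  PresentedMonoid.mk_eq_mk_of_rel (.complement a b)

/-- The length of the words representing an element of the presented monoid. -/
def degree : C.Presented →* Multiplicative ℕ :=
  PresentedMonoid.lift (fun _ ↦ Multiplicative.ofAdd 1) <| by
    rintro _ _ ⟨a, b⟩
    simp [FreeMonoid.lift_apply, C.length_compl_comm a b]

theorem degree_mk (w : FreeMonoid S) :
    C.degree (PresentedMonoid.mk C.Rels w) = Multiplicative.ofAdd w.length := by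
  induction w using FreeMonoid.inductionOn with
  | one => rfl
  | of a => rfl
  | mul u v hu hv => simp [hu, hv]

@[simp] theorem degree_of (a : S) : C.degree (C.of a) = Multiplicative.ofAdd 1 := rfl

/-- Subword reversing: from words `u`, `v` it computes, if it terminates within the given number of
rounds, words `p`, `q` such that `u` followed by `p` and `v` followed by `q` both represent a left
lcm of `u` and `v`. -/
def reversing : ℕ → List S → List S → Option (List S × List S)
  | 0, _, _ => none
  | _ + 1, [], v => some (v, [])
  | _ + 1, u, [] => some ([], u)
  | k + 1, a :: u, b :: v => do
    let (p, u₁) ← reversing k u (C.compl a b)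
    let (v₁, q) ← reversing k (C.compl b a) v
    let (v₂, u₂) ← reversing k u₁ v₁
    return (p ++ v₂, q ++ u₂)

/-- The letters `a` and `b` have the left lcm prescribed by the complement, as far as common
multiples in `P` are concerned. -/
def HasLcmOn (P : Set C.Presented) : Prop :=
  ∀ a b, IsLeftLcmOn P (C.of a) (C.of b) (C.eval (C.compl a b)) (C.eval (C.compl b a))

variable {C} in
theorem HasLcmOn.of_reversing {P : Set C.Presented} (hP : ∀ x y, x * y ∈ P → x ∈ P)
    (h : C.HasLcmOn P) {k : ℕ} {u v : List S} {w : List S × List S}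
    (hw : w ∈ C.reversing k u v) :
    IsLeftLcmOn P (C.eval u) (C.eval v) (C.eval w.1) (C.eval w.2) := by
  induction k generalizing u v w with
  | zero => simp [reversing] at hw
  | succ k ih =>
    match u, v with
    | [], v =>
      obtain rfl : (v, []) = w := by simpa [reversing] using hw
      exact .one_left P _
    | a :: u, [] =>
      obtain rfl : ([], a :: u) = w := by simpa [reversing] using hw
      exact (IsLeftLcmOn.one_left P _).symm
    | a :: u, b :: v =>
      simp only [reversing, Option.mem_def, Option.bind_eq_bind, Option.bind_eq_some_iff] at hw
      obtain ⟨⟨p, u₁⟩, h₁, ⟨v₁, q⟩, h₂, ⟨v₂, u₂⟩, h₃, h₄⟩ := hw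
      obtain rfl : (p ++ v₂, q ++ u₂) = w := by simpa using h₄
      simp only [eval_cons, eval_append]
      exact ((h a b).mul_left hP (ih h₁)).mul_right hP ((ih h₂).mul_left hP (ih h₃))

/-- Garside's cube condition for the letters `a`, `b`, `c`, checked by reversing words: the lcm of
`a`, `b` divides the common multiple of `a`, `c` and `b` that reversing produces. -/
def Cube (k : ℕ) (a b c : S) : Prop :=
  ∃ w ∈ C.reversing k (C.compl c a) (C.compl c b),
    ∃ r ∈ C.reversing k (C.compl a b) (C.compl a c ++ w.1),
      r.2 = [] ∧ ([], []) ∈ C.reversing k (C.compl b a ++ r.1) (C.compl b c ++ w.2)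

instance [DecidableEq S] (k : ℕ) (a b c : S) : Decidable (C.Cube k a b c) := by
  unfold Cube; infer_instance

section Naturality

variable {C} {C' : LeftComplement T} {g : S → T}

theorem reversing_map (hg : ∀ a b, C'.compl (g a) (g b) = (C.compl a b).map g) (k : ℕ)
    (u v : List S) : C'.reversing k (u.map g) (v.map g) =
      (C.reversing k u v).map (Prod.map (List.map g) (List.map g)) := by
  induction k generalizing u v with
  | zero => rfl
  | succ k ih =>
    match u, v with
    | [], v => rfl
    | a :: u, [] => rfl
    | a :: u, b :: v =>
      simp [reversing, hg, ih, Option.bind_map, Option.map_bind]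

theorem cube_map_iff (hg : ∀ a b, C'.compl (g a) (g b) = (C.compl a b).map g) {k : ℕ}
    {a b c : S} : C'.Cube k (g a) (g b) (g c) ↔ C.Cube k a b c := by
  simp [Cube, hg, reversing_map hg, ← List.map_append]

end Naturality

section Garside

variable {C}

/-- The left lcm of the letters `a` and `b` is a common right divisor of `x * a = y * b`; the
quotients `x` and `y` are recorded rather than the multiple. -/
def LcmDvd (a b : S) (x y : C.Presented) : Prop :=
  ∃ z, x = z * C.eval (C.compl a b) ∧ y = z * C.eval (C.compl b a)

theorem LcmDvd.refl (a : S) (x : C.Presented) : LcmDvd a a x x :=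
  ⟨x, by simp [C.compl_self], by simp [C.compl_self]⟩

theorem LcmDvd.symm {a b : S} {x y : C.Presented} (h : LcmDvd a b x y) : LcmDvd b a y x :=
  let ⟨z, hx, hy⟩ := h; ⟨z, hy, hx⟩

theorem LcmDvd.mul_left {a b : S} {x y : C.Presented} (t : C.Presented) (h : LcmDvd a b x y) :
    LcmDvd a b (t * x) (t * y) := by
  obtain ⟨z, rfl, rfl⟩ := h
  exact ⟨t * z, (mul_assoc _ _ _).symm, (mul_assoc _ _ _).symm⟩

theorem LcmDvd.trans {k : ℕ} {a b c : S} {x y t : C.Presented} {P : Set C.Presented}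
    (hP : ∀ x y, x * y ∈ P → x ∈ P) (h : C.HasLcmOn P) (hcube : C.Cube k a b c) (ht : t ∈ P)
    (hac : LcmDvd a c x t) (hcb : LcmDvd c b t y) : LcmDvd a b x y := by
  obtain ⟨z, rfl, rfl⟩ := hac
  obtain ⟨z', hz', rfl⟩ := hcb
  obtain ⟨w, hw, r, hr, hr₂, hnil⟩ := hcube
  obtain ⟨s, rfl, rfl⟩ := (h.of_reversing hP hw).exists_eq_mul ht hz'
  have hr := (h.of_reversing hP hr).mul_eq_mul
  have hnil := (h.of_reversing hP hnil).mul_eq_mul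
  simp only [hr₂, eval_append, eval_nil, one_mul] at hr hnil
  exact ⟨s * C.eval r.1, by rw [mul_assoc, ← hr, mul_assoc], by rw [mul_assoc, ← hnil, mul_assoc]⟩

/-- The elements represented by words of length less than `N`. -/
def ball (C : LeftComplement S) (N : ℕ) : Set C.Presented := {x | (C.degree x).toAdd < N}

theorem mem_ball_of_mul_mem_ball {N : ℕ} (x y : C.Presented) (h : x * y ∈ C.ball N) :
    x ∈ C.ball N := by
  simp only [ball, map_mul, toAdd_mul, Set.mem_ofPred_eq] at h ⊢
  lia

theorem mk_mem_ball {N : ℕ} {w : FreeMonoid S} :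
    PresentedMonoid.mk C.Rels w ∈ C.ball N ↔ w.length < N := by
  simp [ball, degree_mk]

theorem length_eq_of_conGen {w w' : FreeMonoid S} (h : ConGen.Rel C.Rels w w') :
    w.length = w'.length := by
  simpa [degree_mk] using congrArg C.degree (PresentedMonoid.mk_eq_mk_iff.mpr h)

theorem eq_one_or_eq_mul_of (w : FreeMonoid S) : w = 1 ∨ ∃ x a, w = x * .of a :=
  List.eq_nil_or_concat' w

theorem mul_of_inj {x x' : FreeMonoid S} {a a' : S} :
    x * .of a = x' * .of a' ↔ x = x' ∧ a = a' :=
  List.append_singleton_inj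

/-- Induction on a derivation of `w = w'`. The cube condition enters at transitivity steps, and only
for lcms of letters with a common multiple shorter than `w`. -/
theorem lcmDvd_of_conGen {k N : ℕ} (hcube : ∀ a b c, C.Cube k a b c)
    (hN : C.HasLcmOn (C.ball N)) {w w' : FreeMonoid S} (h : ConGen.Rel C.Rels w w')
    {x y : FreeMonoid S} {a b : S} (hw : w = x * .of a) (hw' : w' = y * .of b)
    (hlen : w.length < N + 1) :
    LcmDvd a b (PresentedMonoid.mk C.Rels x) (PresentedMonoid.mk C.Rels y) := by
  induction h generalizing x y a b with
  | of _ _ h =>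
    obtain ⟨a', b'⟩ := h
    obtain ⟨rfl, rfl⟩ := mul_of_inj.mp hw
    obtain ⟨rfl, rfl⟩ := mul_of_inj.mp hw'
    exact ⟨1, (one_mul _).symm, (one_mul _).symm⟩
  | refl =>
    obtain ⟨rfl, rfl⟩ := mul_of_inj.mp (hw.symm.trans hw')
    exact .refl _ _
  | symm h ih => exact (ih hw' hw (length_eq_of_conGen h ▸ hlen)).symm
  | @trans w v w' h h' ih ih' =>
    have hv := length_eq_of_conGen h
    obtain rfl | ⟨t, c, rfl⟩ := eq_one_or_eq_mul_of v
    · simp [hw] at hv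
    have ht : PresentedMonoid.mk C.Rels t ∈ C.ball N := by
      rw [mk_mem_ball]
      rw [hv, FreeMonoid.length_mul] at hlen
      exact Nat.lt_of_succ_lt_succ hlen
    exact (ih hw rfl hlen).trans (fun _ _ ↦ mem_ball_of_mul_mem_ball _ _) hN (hcube a b c) ht
      (ih' rfl hw' (hv ▸ hlen))
  | @mul w w' v v' h h' ih ih' =>
    have hv := length_eq_of_conGen h'
    obtain rfl | ⟨t, c, rfl⟩ := eq_one_or_eq_mul_of v
    · obtain rfl : v' = 1 := FreeMonoid.length_eq_zero.mp hv.symm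
      simp only [mul_one] at hw hw' hlen
      exact ih hw hw' hlen
    obtain rfl | ⟨t', c', rfl⟩ := eq_one_or_eq_mul_of v'
    · simp at hv
    rw [← mul_assoc, mul_of_inj] at hw hw'
    obtain ⟨rfl, rfl⟩ := hw
    obtain ⟨rfl, rfl⟩ := hw'
    rw [map_mul, map_mul, ← PresentedMonoid.mk_eq_mk_iff.mpr h]
    refine (ih' rfl rfl ?_).mul_left _
    rw [FreeMonoid.length_mul] at hlen
    lia

theorem hasLcmOn_ball {k : ℕ} (hcube : ∀ a b c, C.Cube k a b c) (N : ℕ) :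
    C.HasLcmOn (C.ball N) := by
  induction N with
  | zero =>
    refine fun a b ↦ ⟨C.eval_compl_mul_of a b, fun hu _ ↦ absurd hu (Nat.not_lt_zero _)⟩
  | succ N ih =>
    refine fun a b ↦ ⟨C.eval_compl_mul_of a b, fun {u v} hu huv ↦ ?_⟩
    obtain ⟨x, rfl⟩ := PresentedMonoid.surjective_mk u
    obtain ⟨y, rfl⟩ := PresentedMonoid.surjective_mk v
    refine lcmDvd_of_conGen hcube ih (PresentedMonoid.mk_eq_mk_iff.mp huv) rfl rfl ?_
    rwa [← mk_mem_ball (C := C), map_mul]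

theorem hasLcmOn_univ {k : ℕ} (hcube : ∀ a b c, C.Cube k a b c) : C.HasLcmOn Set.univ :=
  fun a b ↦ ⟨C.eval_compl_mul_of a b, fun {u _} _ huv ↦
    (hasLcmOn_ball hcube ((C.degree (u * C.of a)).toAdd + 1) a b).exists_eq_mul
      (Nat.lt_succ_self _) huv⟩

theorem isRightCancelMul (h : C.HasLcmOn Set.univ) : IsRightCancelMul C.Presented where
  mul_right_cancel x y z hxz := by
    obtain ⟨u, rfl⟩ := C.eval_surjective x
    induction u generalizing y z with
    | nil => simpa using hxz
    | cons a u ih =>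
      simp only [eval_cons, ← mul_assoc] at hxz
      obtain ⟨w, hy, hz⟩ := (h a a).exists_eq_mul trivial hxz
      exact ih _ _ (hy.trans hz.symm)

/-- The submonoid generated by a set of letters. -/
def parabolic (C : LeftComplement S) (K : Set S) : Submonoid C.Presented :=
  Submonoid.closure (C.of '' K)

theorem parabolic_univ : C.parabolic Set.univ = ⊤ := by
  rw [parabolic, Set.image_univ]
  exact PresentedMonoid.closure_range_of C.Rels

theorem mem_parabolic {K : Set S} {x : C.Presented} :
    x ∈ C.parabolic K ↔ ∃ u, (∀ a ∈ u, a ∈ K) ∧ C.eval u = x := by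
  refine ⟨fun hx ↦ ?_, ?_⟩
  · induction hx using Submonoid.closure_induction with
    | mem _ ha =>
      obtain ⟨a, ha, rfl⟩ := ha
      exact ⟨[a], by simpa using ha, C.eval_singleton a⟩
    | one => exact ⟨[], by simp⟩
    | mul _ _ _ _ hx hy =>
      obtain ⟨u, hu, rfl⟩ := hx
      obtain ⟨v, hv, rfl⟩ := hy
      exact ⟨v ++ u, by grind, C.eval_append v u⟩
  · rintro ⟨u, hu, rfl⟩
    induction u with
    | nil => exact one_mem _
    | cons a u ih =>
      rw [List.forall_mem_cons] at hu
      rw [eval_cons]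
      exact mul_mem (ih hu.2) (Submonoid.subset_closure ⟨a, hu.1, rfl⟩)

theorem exists_isLeftLcmOn_eval (h : C.HasLcmOn Set.univ) {K : Set S}
    (hK : ∀ a ∈ K, ∀ b ∈ K, ∀ c ∈ C.compl a b, c ∈ K) {N : ℕ} {u v : List S}
    {x y : C.Presented} (hu : ∀ a ∈ u, a ∈ K) (hv : ∀ a ∈ v, a ∈ K)
    (hxy : x * C.eval u = y * C.eval v) (hN : x * C.eval u ∈ C.ball N) :
    ∃ p q : List S, (∀ a ∈ p, a ∈ K) ∧ (∀ a ∈ q, a ∈ K) ∧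
      IsLeftLcmOn Set.univ (C.eval u) (C.eval v) (C.eval p) (C.eval q) := by
  induction N generalizing u v x y with
  | zero => exact absurd hN (Nat.not_lt_zero _)
  | succ N ih =>
    match u, v with
    | [], v => exact ⟨v, [], hv, by simp, .one_left _ _⟩
    | a :: u, [] => exact ⟨[], a :: u, by simp, hu, (IsLeftLcmOn.one_left _ _).symm⟩
    | a :: u, b :: v =>
      rw [List.forall_mem_cons] at hu hv
      simp only [eval_cons, ← mul_assoc] at hxy hN ⊢
      obtain ⟨z, hx, hy⟩ := (h a b).exists_eq_mul trivial hxy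
      have hxN : x * C.eval u ∈ C.ball N := by simpa [ball] using hN
      have hyN : y * C.eval v ∈ C.ball N := by rw [hxy] at hN; simpa [ball] using hN
      obtain ⟨p, u₁, hp, hu₁, h₁⟩ := ih hu.2 (hK a hu.1 b hv.1) hx hxN
      obtain ⟨v₁, q, hv₁, hq, h₂⟩ := ih (hK b hv.1 a hu.1) hv.2 hy.symm (hy ▸ hyN)
      obtain ⟨z₁, -, hz₁⟩ := h₁.exists_eq_mul trivial hx
      obtain ⟨z₂, hz₂, -⟩ := h₂.exists_eq_mul trivial hy.symm
      have hzN : z₁ * C.eval u₁ ∈ C.ball N :=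
        hz₁ ▸ mem_ball_of_mul_mem_ball _ _ (hx ▸ hxN)
      obtain ⟨v₂, u₂, hv₂, hu₂, h₃⟩ := ih hu₁ hv₁ (hz₁.symm.trans hz₂) hzN
      refine ⟨p ++ v₂, q ++ u₂, by grind, by grind, ?_⟩
      simp only [eval_append]
      exact ((h a b).mul_left (by simp) h₁).mul_right (by simp) (h₂.mul_left (by simp) h₃)

theorem exists_isLeftLcmOn (h : C.HasLcmOn Set.univ) {K : Set S}
    (hK : ∀ a ∈ K, ∀ b ∈ K, ∀ c ∈ C.compl a b, c ∈ K) {x y u v : C.Presented}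
    (hx : x ∈ C.parabolic K) (hy : y ∈ C.parabolic K) (huv : u * x = v * y) :
    ∃ p ∈ C.parabolic K, ∃ q ∈ C.parabolic K, IsLeftLcmOn Set.univ x y p q := by
  obtain ⟨x, hx', rfl⟩ := mem_parabolic.mp hx
  obtain ⟨y, hy', rfl⟩ := mem_parabolic.mp hy
  obtain ⟨p, q, hp, hq, h⟩ :=
    exists_isLeftLcmOn_eval h hK hx' hy' huv (Nat.lt_succ_self (C.degree (u * C.eval x)).toAdd)
  exact ⟨_, mem_parabolic.mpr ⟨p, hp, rfl⟩, _, mem_parabolic.mpr ⟨q, hq, rfl⟩, h⟩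

theorem eq_one_of_degree_mul_le {x y : C.Presented} (h : C.degree (x * y) ≤ C.degree y) :
    x = 1 := by
  obtain ⟨w, rfl⟩ := PresentedMonoid.surjective_mk x
  rw [map_mul, mul_le_iff_le_one_left', degree_mk] at h
  rw [FreeMonoid.length_eq_zero.mp (Nat.le_zero.mp h), map_one]

theorem existsUnique_maximal_right_divisor (h : C.HasLcmOn Set.univ) {K : Set S}
    (hK : ∀ a ∈ K, ∀ b ∈ K, ∀ c ∈ C.compl a b, c ∈ K) (b : C.Presented) :
    ∃! x, x ∈ C.parabolic K ∧ (∃ c, b = c * x) ∧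
      ∀ y ∈ C.parabolic K, (∃ c, b = c * y) → ∃ z ∈ C.parabolic K, x = z * y := by
  let D : Set C.Presented := {x | x ∈ C.parabolic K ∧ ∃ c, b = c * x}
  have le_degree_mul (u v : C.Presented) : C.degree v ≤ C.degree (u * v) := by
    rw [map_mul]
    exact le_mul_of_one_le_left' bot_le
  have hD : (C.degree '' D).Finite := by
    refine (Set.finite_Iic (C.degree b)).subset ?_
    rintro _ ⟨x, ⟨-, c, rfl⟩, rfl⟩
    exact le_degree_mul c x
  obtain ⟨_, ⟨x, ⟨hx, c, hc⟩, rfl⟩, hmax⟩ :=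
    hD.exists_maximal ⟨_, 1, ⟨one_mem _, b, (mul_one b).symm⟩, rfl⟩
  have hdvd : ∀ y ∈ C.parabolic K, (∃ c, b = c * y) → ∃ z ∈ C.parabolic K, x = z * y := by
    rintro y hy ⟨c', hc'⟩
    obtain ⟨p, hp, q, hq, hpq⟩ := exists_isLeftLcmOn h hK hx hy (hc.symm.trans hc')
    obtain ⟨z, rfl, -⟩ := hpq.exists_eq_mul trivial (hc.symm.trans hc')
    have hdeg := hmax ⟨p * x, ⟨mul_mem hp hx, z, by rw [hc, mul_assoc]⟩, rfl⟩ (le_degree_mul p x)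
    refine ⟨q, hq, ?_⟩
    rw [← hpq.mul_eq_mul, eq_one_of_degree_mul_le hdeg, one_mul]
  refine ⟨x, ⟨hx, ⟨c, hc⟩, hdvd⟩, fun y ⟨hy, hyb, hymax⟩ ↦ ?_⟩
  obtain ⟨z, -, hz⟩ := hdvd y hy hyb
  obtain ⟨t, -, ht⟩ := hymax x hx ⟨c, hc⟩
  have hdeg : C.degree (z * y) ≤ C.degree y := by
    rw [← hz]
    exact ht ▸ le_degree_mul t x
  rw [hz, eq_one_of_degree_mul_le hdeg, one_mul]

end Garside

end LeftComplement

/-! ### Common multiples and groups of fractions -/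

theorem map_mul_inv_mem_map_iff {M G : Type*} [Monoid M] [Group G] {φ : M →* G}
    (hφ : Function.Injective φ) {P : Submonoid M} {b x : M} :
    φ b * (φ x)⁻¹ ∈ P.map φ ↔ ∃ c ∈ P, b = c * x := by
  simp only [Submonoid.mem_map, eq_mul_inv_iff_mul_eq, ← map_mul, hφ.eq_iff, eq_comm]

section CommonMultiples

universe u

variable {M : Type u} [Monoid M]

open OreLocalization in
/-- **Ore's theorem**; the group is that of left fractions of elements of `M`. -/
theorem exists_injective_monoidHom_group [IsCancelMul M]
    (h : ∀ x y : M, ∃ u v, u * x = v * y) :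
    ∃ (G : Type u) (_ : Group G) (ι : M →* G), Function.Injective ι := by
  choose u v huv using h
  let _ : OreSet (⊤ : Submonoid M) :=
    { ore_right_cancel := fun _ _ _ hs ↦ ⟨1, congrArg _ (mul_right_cancel hs)⟩
      oreNum := fun r s ↦ v r s
      oreDenom := fun r s ↦ ⟨u r s, trivial⟩
      ore_eq := fun r s ↦ huv r s }
  refine ⟨_, _, IsUnit.liftRight (numeratorHom (S := (⊤ : Submonoid M)))
    fun x ↦ numerator_isUnit ⟨x, Submonoid.mem_top x⟩, fun x y hxy ↦ ?_⟩
  have hxy : x /ₒ (1 : (⊤ : Submonoid M)) = y /ₒ 1 := congrArg Units.val hxy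
  obtain ⟨s, t, hst, hs⟩ := oreDiv_eq_iff.mp hxy
  obtain rfl : (s : M) = t := by simpa using hs
  exact (mul_left_cancel hst).symm

theorem exists_semiconjBy {A : Set M} (hA : Submonoid.closure A = ⊤) {d : M}
    (hconj : ∀ a ∈ A, ∃ b, SemiconjBy d a b) (x : M) : ∃ y, SemiconjBy d x y := by
  induction x using Submonoid.induction_of_closure_eq_top_left hA with
  | one => exact ⟨1, .one_right d⟩
  | mul_left a ha x ih =>
    obtain ⟨b, hb⟩ := hconj a ha
    obtain ⟨y, hy⟩ := ih
    exact ⟨b * y, hb.mul_right hy⟩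

theorem exists_mul_eq_pow {A : Set M} (hA : Submonoid.closure A = ⊤) {d : M}
    (h : ∀ a ∈ A, ∃ b c, b * a = d ∧ c * b = d) (x : M) : ∃ (m : ℕ) (y : M), y * x = d ^ m := by
  have hconj : ∀ a ∈ A, ∃ c, SemiconjBy d a c := fun a ha ↦ by
    obtain ⟨b, c, hb, hc⟩ := h a ha
    exact ⟨c, by rw [SemiconjBy, ← hc, mul_assoc, hb, hc]⟩
  induction x using Submonoid.induction_of_closure_eq_top_left hA with
  | one => exact ⟨0, 1, by simp⟩
  | mul_left a ha x ih =>
    obtain ⟨m, y, hy⟩ := ih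
    obtain ⟨b, -, hb, -⟩ := h a ha
    obtain ⟨y', hy'⟩ := exists_semiconjBy hA hconj y
    refine ⟨m + 1, y' * b, ?_⟩
    calc y' * b * (a * x) = y' * d * x := by rw [← hb]; simp only [mul_assoc]
      _ = d * (y * x) := by rw [← hy'.eq, mul_assoc]
      _ = d ^ (m + 1) := by rw [hy, pow_succ']

theorem exists_mul_eq_mul {A : Set M} (hA : Submonoid.closure A = ⊤) {d : M}
    (h : ∀ a ∈ A, ∃ b c, b * a = d ∧ c * b = d) (x y : M) : ∃ u v, u * x = v * y := by
  obtain ⟨k, u, hu⟩ := exists_mul_eq_pow hA h x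
  obtain ⟨l, v, hv⟩ := exists_mul_eq_pow hA h y
  exact ⟨d ^ l * u, d ^ k * v, by
    rw [mul_assoc, mul_assoc, hu, hv, ← pow_add, ← pow_add, add_comm]⟩

end CommonMultiples

/-! ### The Birman–Ko–Lee monoid -/

/-- A chord `(i, j)`, `i < j`, standing for the band generator `a_{i,j}`. -/
abbrev Chord (α : Type*) [LT α] := {c : α × α // c.1 < c.2}

namespace Chord

variable {α β : Type*} [LinearOrder α] [LinearOrder β]

/-- The chord `(i, j)` as a word of length one; the empty word if `j ≤ i`. -/
def letter (i j : α) : List (Chord α) := if h : i < j then [⟨(i, j), h⟩] else []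

/-- The complement `compl s t`, for which `s` followed by `compl s t` represents the lcm of the
chords `s` and `t`. It is `t` unless the chords cross or share an endpoint in such a way that one of
them is slid along the other. -/
def compl (s t : Chord α) : List (Chord α) :=
  if s.1.1 ≤ t.1.1 ∧ t.1.1 < s.1.2 ∧ s.1.2 ≤ t.1.2 then
    letter s.1.1 t.1.1 ++ letter s.1.2 t.1.2
  else if t.1.1 < s.1.1 ∧ s.1.1 ≤ t.1.2 ∧ t.1.2 < s.1.2 then
    letter t.1.1 s.1.2 ++ letter s.1.1 t.1.2
  else [t]

section Values

variable {i j k l : α}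

theorem compl_adjacent (hij : i < j) (hjk : j < k) :
    compl ⟨(i, j), hij⟩ ⟨(j, k), hjk⟩ = [⟨(j, k), hjk⟩] ∧
      compl ⟨(j, k), hjk⟩ ⟨(i, j), hij⟩ = [⟨(i, k), hij.trans hjk⟩] := by
  grind [compl, letter]

theorem compl_common_left (hij : i < j) (hjk : j < k) :
    compl ⟨(i, j), hij⟩ ⟨(i, k), hij.trans hjk⟩ = [⟨(j, k), hjk⟩] ∧
      compl ⟨(i, k), hij.trans hjk⟩ ⟨(i, j), hij⟩ = [⟨(i, j), hij⟩] := by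
  grind [compl, letter]

theorem compl_common_right (hij : i < j) (hjk : j < k) :
    compl ⟨(i, k), hij.trans hjk⟩ ⟨(j, k), hjk⟩ = [⟨(i, j), hij⟩] ∧
      compl ⟨(j, k), hjk⟩ ⟨(i, k), hij.trans hjk⟩ = [⟨(i, k), hij.trans hjk⟩] := by
  grind [compl, letter]

theorem compl_disjoint (hij : i < j) (hjk : j < k) (hkl : k < l) :
    compl ⟨(i, j), hij⟩ ⟨(k, l), hkl⟩ = [⟨(k, l), hkl⟩] ∧
      compl ⟨(k, l), hkl⟩ ⟨(i, j), hij⟩ = [⟨(i, j), hij⟩] := by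
  grind [compl, letter]

theorem compl_nested (hij : i < j) (hjk : j < k) (hkl : k < l) :
    compl ⟨(i, l), (hij.trans hjk).trans hkl⟩ ⟨(j, k), hjk⟩ = [⟨(j, k), hjk⟩] ∧
      compl ⟨(j, k), hjk⟩ ⟨(i, l), (hij.trans hjk).trans hkl⟩ =
        [⟨(i, l), (hij.trans hjk).trans hkl⟩] := by
  grind [compl, letter]

theorem compl_crossing (hij : i < j) (hjk : j < k) (hkl : k < l) :
    compl ⟨(i, k), hij.trans hjk⟩ ⟨(j, l), hjk.trans hkl⟩ =
        [⟨(i, j), hij⟩, ⟨(k, l), hkl⟩] ∧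
      compl ⟨(j, l), hjk.trans hkl⟩ ⟨(i, k), hij.trans hjk⟩ =
        [⟨(i, l), (hij.trans hjk).trans hkl⟩, ⟨(j, k), hjk⟩] := by
  grind [compl, letter]

end Values

variable (α) in
/-- The left complement of the Birman–Ko–Lee presentation of the dual braid monoid. -/
def leftComplement : LeftComplement (Chord α) where
  compl := compl
  compl_self s := by simp [compl, s.2, letter]
  length_compl_comm s t := by
    obtain ⟨⟨i, j⟩, hij⟩ := s
    obtain ⟨⟨k, l⟩, hkl⟩ := t
    dsimp only at hij hkl
    grind [compl, letter]

/-- The image of a chord under an order embedding. -/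
def map (e : α ↪o β) (s : Chord α) : Chord β := ⟨(e s.1.1, e s.1.2), e.strictMono s.2⟩

theorem map_letter (e : α ↪o β) (i j : α) : (letter i j).map (map e) = letter (e i) (e j) := by
  simp only [letter, e.lt_iff_lt]
  split_ifs <;> rfl

theorem compl_map (e : α ↪o β) (s t : Chord α) :
    compl (map e s) (map e t) = (compl s t).map (map e) := by
  simp only [compl, map, e.lt_iff_lt, e.le_iff_le]
  split_ifs <;> simp [map_letter, map]

set_option maxRecDepth 100000 in
theorem cube_fin_six (a b c : Chord (Fin 6)) : (leftComplement (Fin 6)).Cube 5 a b c := by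
  decide +kernel +revert

/-- Three chords have at most six endpoints, so the cube condition is a finite check. -/
theorem cube (a b c : Chord α) : (leftComplement α).Cube 5 a b c := by
  let E : Finset α := {a.1.1, a.1.2, b.1.1, b.1.2, c.1.1, c.1.2}
  let e : E ↪o Fin 6 := (E.orderIsoOfFin rfl).symm.toOrderEmbedding.trans
    (Fin.castLEOrderEmb Finset.card_le_six)
  let a' : Chord E := ⟨(⟨a.1.1, by simp [E]⟩, ⟨a.1.2, by simp [E]⟩), a.2⟩
  let b' : Chord E := ⟨(⟨b.1.1, by simp [E]⟩, ⟨b.1.2, by simp [E]⟩), b.2⟩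
  let c' : Chord E := ⟨(⟨c.1.1, by simp [E]⟩, ⟨c.1.2, by simp [E]⟩), c.2⟩
  have h : (leftComplement E).Cube 5 a' b' c' :=
    (LeftComplement.cube_map_iff (compl_map e)).mp (cube_fin_six _ _ _)
  exact (LeftComplement.cube_map_iff (C' := leftComplement α)
    (compl_map (OrderEmbedding.subtype (· ∈ E)))).mpr h

theorem hasLcmOn_univ : (leftComplement α).HasLcmOn Set.univ :=
  LeftComplement.hasLcmOn_univ cube

/-- The chords with both endpoints in a given set. -/
def within (I : Set α) : Set (Chord α) := {c | c.1.1 ∈ I ∧ c.1.2 ∈ I}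

theorem mem_within_of_mem_compl {I : Set α} (s : Chord α) (hs : s ∈ within I) (t : Chord α)
    (ht : t ∈ within I) (c : Chord α) (hc : c ∈ compl s t) : c ∈ within I := by
  obtain ⟨hs₁, hs₂⟩ := hs
  obtain ⟨ht₁, ht₂⟩ := ht
  have hletter {i j : α} (hi : i ∈ I) (hj : j ∈ I) (hc : c ∈ letter i j) : c ∈ within I := by
    unfold letter at hc
    split_ifs at hc
    · obtain rfl := List.mem_singleton.mp hc
      exact ⟨hi, hj⟩
    · simp at hc
  unfold compl at hc
  split_ifs at hc
  · exact (List.mem_append.mp hc).elim (hletter hs₁ ht₁) (hletter hs₂ ht₂)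
  · exact (List.mem_append.mp hc).elim (hletter ht₁ hs₂) (hletter hs₁ ht₂)
  · exact List.mem_singleton.mp hc ▸ ⟨ht₁, ht₂⟩

end Chord

/-- The Birman–Ko–Lee relations between band generators, for a family indexed by a linear order. -/
structure IsBandFamily {α N : Type*} [LT α] [Monoid N] (g : α → α → N) : Prop where
  slide_left {i j k : α} : i < j → j < k → g j k * g i j = g i k * g j k
  slide_right {i j k : α} : i < j → j < k → g i j * g i k = g j k * g i j
  disjoint {i j k l : α} : i < j → j < k → k < l → Commute (g i j) (g k l)
  nested {i j k l : α} : i < j → j < k → k < l → Commute (g i l) (g j k)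

/-- The monoid with one generator for each chord, subject to the Birman–Ko–Lee relations. -/
abbrev ChordMonoid (α : Type*) [LinearOrder α] := (Chord.leftComplement α).Presented

namespace ChordMonoid

open Chord

variable {α β N : Type*} [LinearOrder α] [LinearOrder β] [Monoid N]

/-- The generator attached to the chord `(i, j)`; it is `1` if `j ≤ i`. -/
def chord (i j : α) : ChordMonoid α := (leftComplement α).eval (letter i j)

theorem chord_of_lt {i j : α} (h : i < j) :
    chord i j = (leftComplement α).of ⟨(i, j), h⟩ := by
  simp [chord, letter, h]

theorem hom_ext {F F' : ChordMonoid α →* N} (h : ∀ i j, i < j → F (chord i j) = F' (chord i j)) :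
    F = F' := by
  refine PresentedMonoid.ext _ fun c : Chord α ↦ ?_
  have hc := h c.1.1 c.1.2 c.2
  rwa [chord_of_lt c.2] at hc

end ChordMonoid

namespace IsBandFamily

variable {α β N : Type*} [LinearOrder α] [LinearOrder β] [Monoid N] {g : α → α → N}

theorem crossing (hg : IsBandFamily g) {i j k l : α} (hij : i < j) (hjk : j < k) (hkl : k < l) :
    g k l * g i j * g i k = g j k * g i l * g j l := by
  calc g k l * g i j * g i k = g i j * (g k l * g i k) := by
        rw [← (hg.disjoint hij hjk hkl).eq, mul_assoc]
    _ = (g i j * g i l) * g k l := by rw [hg.slide_left (hij.trans hjk) hkl, mul_assoc]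
    _ = g i l * (g j l * g k l) := by
        rw [hg.slide_right hij (hjk.trans hkl), hg.slide_left hij (hjk.trans hkl), mul_assoc]
    _ = g i l * (g j k * g j l) := by rw [hg.slide_right hjk hkl, hg.slide_left hjk hkl]
    _ = g j k * g i l * g j l := by rw [← mul_assoc, (hg.nested hij hjk hkl).eq]

theorem compl_relation (hg : IsBandFamily g) (s t : Chord α) :
    ((s.compl t).reverse.map fun c ↦ g c.1.1 c.1.2).prod * g s.1.1 s.1.2 =
      ((t.compl s).reverse.map fun c ↦ g c.1.1 c.1.2).prod * g t.1.1 t.1.2 := by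
  wlog hst : s.1.1 < t.1.1 ∨ s.1.1 = t.1.1 ∧ s.1.2 ≤ t.1.2 generalizing s t
  · exact (this t s (by grind)).symm
  obtain ⟨⟨i, j⟩, hij⟩ := s
  obtain ⟨⟨k, l⟩, hkl⟩ := t
  dsimp only at hij hkl hst ⊢
  obtain hik | ⟨rfl, hjl⟩ := hst
  · obtain hkj | rfl | hjk := lt_trichotomy k j
    · obtain hjl | rfl | hlj := lt_trichotomy j l
      · simpa [Chord.compl_crossing hik hkj hjl] using hg.crossing hik hkj hjl
      · simpa [Chord.compl_common_right hik hkj] using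
          (hg.slide_right hik hkj).trans (hg.slide_left hik hkj)
      · simpa [Chord.compl_nested hik hkl hlj] using (hg.nested hik hkl hlj).symm.eq
    · simpa [Chord.compl_adjacent hij hkl] using hg.slide_left hij hkl
    · simpa [Chord.compl_disjoint hij hjk hkl] using (hg.disjoint hij hjk hkl).symm.eq
  · obtain rfl | hjl := hjl.eq_or_lt
    · rfl
    · simpa [Chord.compl_common_left hij hjl] using (hg.slide_right hij hjl).symm

/-- The homomorphism out of the chord monoid determined by a band family. -/
def lift (hg : IsBandFamily g) : ChordMonoid α →* N :=
  PresentedMonoid.lift (fun c : Chord α ↦ g c.1.1 c.1.2) <| by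
    rintro _ _ ⟨s, t⟩
    simpa [FreeMonoid.lift_apply, Chord.leftComplement] using hg.compl_relation s t

theorem lift_of (hg : IsBandFamily g) (c : Chord α) :
    hg.lift ((Chord.leftComplement α).of c) = g c.1.1 c.1.2 :=
  PresentedMonoid.lift_of ..

theorem lift_chord (hg : IsBandFamily g) {i j : α} (hij : i < j) :
    hg.lift (ChordMonoid.chord i j) = g i j := by
  rw [ChordMonoid.chord_of_lt hij, lift_of]

theorem map {N' : Type*} [Monoid N'] (hg : IsBandFamily g) (φ : N →* N') :
    IsBandFamily fun i j ↦ φ (g i j) where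
  slide_left hij hjk := by simp only [← map_mul, hg.slide_left hij hjk]
  slide_right hij hjk := by simp only [← map_mul, hg.slide_right hij hjk]
  disjoint hij hjk hkl := (hg.disjoint hij hjk hkl).map φ
  nested hij hjk hkl := (hg.nested hij hjk hkl).map φ

open MulOpposite in
theorem mirror (hg : IsBandFamily g) {f : β → α} (hf : StrictAnti f) :
    IsBandFamily fun i j ↦ op (g (f j) (f i)) where
  slide_left hij hjk := congrArg op (hg.slide_right (hf hjk) (hf hij)).symm
  slide_right hij hjk := congrArg op (hg.slide_left (hf hjk) (hf hij)).symm
  disjoint hij hjk hkl := (hg.disjoint (hf hkl) (hf hjk) (hf hij)).symm.op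
  nested hij hjk hkl := (hg.nested (hf hkl) (hf hjk) (hf hij)).op

end IsBandFamily

namespace ChordMonoid

open Chord

variable {α β : Type*} [LinearOrder α] [LinearOrder β]

theorem eval_compl_mul_chord {i j k l : α} (hij : i < j) (hkl : k < l) :
    (leftComplement α).eval (compl ⟨(i, j), hij⟩ ⟨(k, l), hkl⟩) * chord i j =
      (leftComplement α).eval (compl ⟨(k, l), hkl⟩ ⟨(i, j), hij⟩) * chord k l := by
  rw [chord_of_lt hij, chord_of_lt hkl]
  exact (leftComplement α).eval_compl_mul_of _ _

theorem isBandFamily_chord : IsBandFamily (chord : α → α → ChordMonoid α) where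
  slide_left hij hjk := by
    simpa [compl_adjacent, ← chord_of_lt] using eval_compl_mul_chord hij hjk
  slide_right hij hjk := by
    simpa [compl_common_left hij hjk, ← chord_of_lt] using
      (eval_compl_mul_chord hij (hij.trans hjk)).symm
  disjoint hij hjk hkl := by
    simpa [compl_disjoint hij hjk hkl, ← chord_of_lt, commute_iff_eq] using
      (eval_compl_mul_chord hij hkl).symm
  nested hij hjk hkl := by
    simpa [compl_nested hij hjk hkl, ← chord_of_lt, commute_iff_eq] using
      (eval_compl_mul_chord ((hij.trans hjk).trans hkl) hjk).symm

/-- The anti-homomorphism induced by an order-reversing map of the points. -/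
def mirror {f : α → β} (hf : StrictAnti f) : ChordMonoid α →* (ChordMonoid β)ᵐᵒᵖ :=
  (isBandFamily_chord.mirror hf).lift

open MulOpposite in
theorem mirror_chord {f : α → β} (hf : StrictAnti f) {i j : α} (hij : i < j) :
    mirror hf (chord i j) = op (chord (f j) (f i)) :=
  (isBandFamily_chord.mirror hf).lift_chord hij

theorem mirror_injective {f : α → β} (hf : StrictAnti f) {f' : β → α} (hf' : StrictAnti f')
    (hff' : Function.LeftInverse f' f) : Function.Injective (mirror hf) := by
  have h : (mirror hf').op.comp (mirror hf) =
      ((MulEquiv.opOp (ChordMonoid α)) : ChordMonoid α →* _) := by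
    refine hom_ext fun i j hij ↦ ?_
    simp [mirror_chord, hij, hf hij, hff' _]
  refine Function.Injective.of_comp (f := (mirror hf').op) ?_
  rw [← MonoidHom.coe_comp, h]
  exact (MulEquiv.opOp _).injective

instance : IsCancelMul (ChordMonoid α) where
  toIsRightCancelMul := LeftComplement.isRightCancelMul hasLcmOn_univ
  toIsLeftCancelMul :=
    have := LeftComplement.isRightCancelMul (hasLcmOn_univ (α := αᵒᵈ))
    (mirror_injective (f := OrderDual.toDual) (f' := OrderDual.ofDual)
      (fun _ _ ↦ id) (fun _ _ ↦ id) (fun _ ↦ rfl)).isLeftCancelMul _ (map_mul _)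

end ChordMonoid

/-! ### The Garside element -/

section Garside

variable {α N : Type*} [LinearOrder α] [Monoid N]

/-- The Garside element `g qₘ₋₁ qₘ ⬝ ⋯ ⬝ g q₂ q₃ ⬝ g q₁ q₂` of a band family, for a list
`q₁ < q₂ < ⋯ < qₘ` of points. -/
def garside (g : α → α → N) : List α → N
  | p :: q :: l => garside g (q :: l) * g p q
  | _ => 1

namespace IsBandFamily

variable {g : α → α → N}

theorem exists_garside_mul_eq (hg : IsBandFamily g) {p q : α} {l : List α}
    (hl : (p :: q :: l).Pairwise (· < ·)) :
    ∃ t ∈ q :: l, (∀ x ∈ q :: l, x ≤ t) ∧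
      garside g (q :: l) * g p q = g p t * garside g (q :: l) := by
  induction l generalizing p q with
  | nil => exact ⟨q, by simp, by simp, by simp [garside]⟩
  | cons r l ih =>
    have hpq : p < q := by simp_all
    have hqr : q < r := by simp_all
    obtain ⟨t, ht, htmax, h⟩ := ih (p := p) (q := r) (by simp_all)
    have hqt : q ≤ t := hqr.le.trans (htmax r List.mem_cons_self)
    refine ⟨t, List.mem_cons_of_mem q ht, List.forall_mem_cons.mpr ⟨hqt, htmax⟩, ?_⟩
    calc garside g (r :: l) * g q r * g p q = garside g (r :: l) * g p r * g q r := by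
          rw [mul_assoc, hg.slide_left hpq hqr, mul_assoc]
      _ = g p t * garside g (q :: r :: l) := by rw [h, mul_assoc, garside]

theorem exists_mul_eq_garside (hg : IsBandFamily g) {l : List α} (hl : l.Pairwise (· < ·))
    {i j : α} (hi : i ∈ l) (hj : j ∈ l) (hij : i < j) :
    ∃ y, ∃ u ∈ l, ∃ v ∈ l, u < v ∧ y * g i j = garside g l ∧ g u v * y = garside g l := by
  induction l generalizing i j with
  | nil => simp at hi
  | cons p l ih =>
  match l with
  | [] => simp_all
  | q :: l =>
    obtain ⟨hpl, hl'⟩ := List.pairwise_cons.mp hl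
    replace ih {i j : α} := ih (i := i) (j := j) hl'
    obtain ⟨t, ht, htmax, h⟩ := hg.exists_garside_mul_eq hl
    have hpq := hpl q List.mem_cons_self
    obtain rfl | hi := List.mem_cons.mp hi
    · have hj := (List.mem_cons.mp hj).resolve_left hij.ne'
      obtain rfl | hjl := List.mem_cons.mp hj
      · exact ⟨_, i, by simp, t, .tail _ ht, hpl t ht, rfl, h.symm⟩
      · have hqj : q < j := (List.pairwise_cons.mp hl').1 j hjl
        obtain ⟨y, u, hu, v, hv, huv, hy, hy'⟩ := ih (by simp) hj hqj
        refine ⟨y * g i q, u, .tail _ hu, v, .tail _ hv, huv, ?_, ?_⟩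
        · rw [mul_assoc, hg.slide_right hpq hqj, ← mul_assoc, hy, garside]
        · rw [← mul_assoc, hy', garside]
    · have hj := (List.mem_cons.mp hj).resolve_left (hij.trans' (hpl i hi)).ne'
      obtain ⟨y, u, hu, v, hv, huv, hy, hy'⟩ := ih hi hj hij
      have hδ : g p t * y * g i j = garside g (p :: q :: l) := by
        rw [mul_assoc, hy, ← h, garside]
      obtain hvt | rfl := (htmax v hv).lt_or_eq
      · refine ⟨g p t * y, u, .tail _ hu, v, .tail _ hv, huv, hδ, ?_⟩
        rw [← mul_assoc, ← (hg.nested (hpl u hu) huv hvt).eq, mul_assoc, hy', ← h, garside]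
      · refine ⟨g p v * y, p, by simp, u, .tail _ hu, hpl u hu, hδ, ?_⟩
        rw [← mul_assoc, hg.slide_right (hpl u hu) huv, hg.slide_left (hpl u hu) huv,
          mul_assoc, hy', ← h, garside]

end IsBandFamily

universe u

theorem ChordMonoid.exists_injective_monoidHom_group (α : Type u) [LinearOrder α] [Finite α] :
    ∃ (G : Type u) (_ : Group G) (ι : ChordMonoid α →* G), Function.Injective ι := by
  cases nonempty_fintype α
  refine _root_.exists_injective_monoidHom_group <|
    exists_mul_eq_mul (PresentedMonoid.closure_range_of _)
      (d := garside chord (Finset.univ.sort (· ≤ ·))) ?_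
  rintro _ ⟨⟨⟨i, j⟩, hij⟩, rfl⟩
  obtain ⟨y, u, -, v, -, -, hy, hy'⟩ := isBandFamily_chord.exists_mul_eq_garside
    (Finset.sortedLT_sort Finset.univ).pairwise (by simp : i ∈ _) (by simp : j ∈ _) hij
  rw [chord_of_lt hij] at hy
  exact ⟨y, _, hy, hy'⟩

end Garside

/-! ### Band generators of the braid group -/

namespace Braid

variable {n : ℕ}

theorem commute_genσ {i j : ℕ} (hi : 1 ≤ i) (hij : i + 2 ≤ j) (hj : j < n) :
    Commute (genσ n i) (genσ n j) := by
  have h : FreeGroup.of i * FreeGroup.of j * (FreeGroup.of i)⁻¹ * (FreeGroup.of j)⁻¹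
      ∈ braidRels n := .inl ⟨i, j, hi, hij, by lia, rfl⟩
  have hone : genσ n i * genσ n j * (genσ n i)⁻¹ * (genσ n j)⁻¹ = 1 :=
    PresentedGroup.one_of_mem h
  rwa [mul_inv_eq_one, mul_inv_eq_iff_eq_mul] at hone

theorem genσ_mul_genσ_mul_genσ {i : ℕ} (hi : 1 ≤ i) (hin : i + 1 < n) :
    genσ n i * genσ n (i + 1) * genσ n i = genσ n (i + 1) * genσ n i * genσ n (i + 1) := by
  have h : FreeGroup.of i * FreeGroup.of (i + 1) * FreeGroup.of i *
      (FreeGroup.of (i + 1) * FreeGroup.of i * FreeGroup.of (i + 1))⁻¹ ∈ braidRels n :=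
    .inr (.inl ⟨i, hi, by lia, rfl⟩)
  exact mul_inv_eq_one.mp (PresentedGroup.one_of_mem h)

theorem band_add_one (i : ℕ) : band n i (i + 1) = genσ n i := by
  simp [band]

theorem band_succ {i j : ℕ} (hij : i < j) :
    band n i (j + 1) = genσ n j * band n i j * (genσ n j)⁻¹ := by
  obtain ⟨k, rfl⟩ := Nat.exists_eq_add_of_le hij
  have hk : i.succ + k + 1 - 1 - i = k + 1 := by lia
  have hk' : i.succ + k - 1 - i = k := by lia
  simp only [band, hk, hk', List.range'_1_concat, List.reverse_append, List.map_append,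
    List.prod_append, List.reverse_singleton, List.map_singleton, List.prod_singleton,
    mul_inv_rev, mul_assoc]

theorem commute_band_of_forall_commute_genσ {x : Braid n} {k l : ℕ} (hkl : k < l)
    (h : ∀ m, k ≤ m → m < l → Commute x (genσ n m)) : Commute x (band n k l) := by
  induction l, hkl using Nat.le_induction with
  | base => rw [band_add_one]; exact h k le_rfl k.lt_add_one
  | succ l hl ih =>
    rw [band_succ hl]
    have hx := h l (by lia) (by lia)
    exact (hx.mul_right (ih fun m hkm hml ↦ h m hkm (by lia))).mul_right hx.inv_right

theorem commute_genσ_band_of_lt {m i j : ℕ} (hi : 1 ≤ i) (hij : i < j) (hjm : j < m)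
    (hmn : m < n) : Commute (genσ n m) (band n i j) :=
  commute_band_of_forall_commute_genσ hij fun _ _ _ ↦ (commute_genσ (by lia) (by lia) hmn).symm

theorem commute_genσ_band_of_between {m i j : ℕ} (hi : 1 ≤ i) (him : i < m) (hmj : m + 2 ≤ j)
    (hjn : j ≤ n) : Commute (genσ n m) (band n i j) := by
  induction j, hmj using Nat.le_induction with
  | base =>
    rw [band_succ (by lia), band_succ him]
    have hbraid := genσ_mul_genσ_mul_genσ (n := n) (i := m) (by lia) (by lia)
    have hcomm := commute_genσ_band_of_lt (n := n) (m := m + 1) hi him (by lia) (by lia)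
    set a := genσ n m
    set b := genσ n (m + 1)
    set c := band n i m
    have ha : a = (b * a) * b * (b * a)⁻¹ := by
      rw [eq_mul_inv_iff_mul_eq, ← hbraid, mul_assoc]
    have hc : b * (a * c * a⁻¹) * b⁻¹ = (b * a) * c * (b * a)⁻¹ := by group
    rw [hc]
    nth_rewrite 1 [ha]
    exact (Commute.conj_iff _).mpr hcomm
  | succ j hj ih =>
    rw [band_succ (by lia)]
    have hm : Commute (genσ n m) (genσ n j) := commute_genσ (by lia) hj (by lia)
    exact (hm.mul_right (ih (by lia))).mul_right hm.inv_right

theorem band_slide_left {i j k : ℕ} (hi : 1 ≤ i) (hij : i < j) (hjk : j < k) (hkn : k ≤ n) :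
    band n j k * band n i j = band n i k * band n j k := by
  induction k, hjk using Nat.le_induction with
  | base => rw [band_add_one, band_succ hij, inv_mul_cancel_right]
  | succ k hjk ih =>
    rw [band_succ hjk, band_succ (hij.trans hjk)]
    have hc := (commute_genσ_band_of_lt hi hij hjk hkn).inv_left.eq
    calc genσ n k * band n j k * (genσ n k)⁻¹ * band n i j
        = genσ n k * (band n j k * band n i j) * (genσ n k)⁻¹ := by
          rw [mul_assoc, hc]; simp only [mul_assoc]
      _ = _ := by rw [ih (by lia)]; group

theorem band_mul_genσ_mul_band {i j : ℕ} (hi : 1 ≤ i) (hij : i < j) (hjn : j < n) :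
    band n i j * genσ n j * band n i j = genσ n j * band n i j * genσ n j := by
  induction j, hij using Nat.le_induction with
  | base => rw [band_add_one]; exact genσ_mul_genσ_mul_genσ hi hjn
  | succ j hij ih =>
    rw [band_succ hij]
    have hcomm := commute_genσ_band_of_lt hi hij j.lt_add_one hjn
    have hbraid := genσ_mul_genσ_mul_genσ (n := n) (i := j) (by lia) hjn
    have ih := ih (by lia)
    set a := genσ n j
    set b := genσ n (j + 1)
    set c := band n i j
    -- conjugation by `a * b` turns the induction hypothesis into the claim
    have hb : b = (a * b) * a * (a * b)⁻¹ := by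
      rw [eq_mul_inv_iff_mul_eq, ← mul_assoc, ← hbraid]
    have hc : a * c * a⁻¹ = (a * b) * c * (a * b)⁻¹ := by
      rw [mul_assoc a b c, hcomm.eq]; group
    rw [hc]
    generalize a * b = g at *
    rw [hb]
    calc g * c * g⁻¹ * (g * a * g⁻¹) * (g * c * g⁻¹) = g * (c * a * c) * g⁻¹ := by group
      _ = _ := by rw [ih]; group

theorem band_slide_right {i j k : ℕ} (hi : 1 ≤ i) (hij : i < j) (hjk : j < k) (hkn : k ≤ n) :
    band n i j * band n i k = band n j k * band n i j := by
  induction k, hjk using Nat.le_induction with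
  | base =>
    rw [band_add_one, band_succ hij, ← mul_assoc, ← mul_assoc, band_mul_genσ_mul_band hi hij hkn,
      mul_inv_cancel_right]
  | succ k hjk ih =>
    rw [band_succ hjk, band_succ (hij.trans hjk)]
    have hc := commute_genσ_band_of_lt hi hij hjk hkn
    calc band n i j * (genσ n k * band n i k * (genσ n k)⁻¹)
        = genσ n k * (band n i j * band n i k) * (genσ n k)⁻¹ := by
          simp only [← mul_assoc]; rw [hc.eq]
      _ = genσ n k * band n j k * (band n i j * (genσ n k)⁻¹) := by
          rw [ih (by lia)]; simp only [mul_assoc]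
      _ = _ := by rw [← hc.inv_left.eq]; simp only [mul_assoc]

variable (n) in
theorem isBandFamily_band : IsBandFamily fun i j : Set.Icc 1 n ↦ band n i j where
  slide_left {i _ k} hij hjk := band_slide_left i.2.1 hij hjk k.2.2
  slide_right {i _ k} hij hjk := band_slide_right i.2.1 hij hjk k.2.2
  disjoint {i j k l} hij hjk hkl := by
    have hi := i.2.1
    have hl := l.2.2
    have hjk : (j : ℕ) < k := hjk
    exact commute_band_of_forall_commute_genσ hkl fun m hkm hml ↦
      (commute_genσ_band_of_lt hi hij (by lia) (by lia)).symm
  nested {i j k l} hij hjk hkl := by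
    have hij : (i : ℕ) < j := hij
    have hkl : (k : ℕ) < l := hkl
    exact commute_band_of_forall_commute_genσ hjk fun m hjm hmk ↦
      (commute_genσ_band_of_between i.2.1 (by lia) (by lia) l.2.2).symm

section Lift

variable {G : Type*} [Group G] {g : Set.Icc 1 n → Set.Icc 1 n → G}

/-- The image of the Artin generator `σ_i` under the homomorphism determined by a band family; it is
`1` for the indices `i` for which `σ_i = 1` by convention. -/
def adjacent (g : Set.Icc 1 n → Set.Icc 1 n → G) (i : ℕ) : G :=
  if h : 1 ≤ i ∧ i < n then g ⟨i, h.1, h.2.le⟩ ⟨i + 1, i.succ_pos, h.2⟩ else 1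

/-- The homomorphism from the braid group determined by a band family. -/
def lift (hg : IsBandFamily g) : Braid n →* G :=
  PresentedGroup.toGroup (f := adjacent g) <| by
    rintro _ (⟨i, j, hi, hij, hjn, rfl⟩ | ⟨i, hi, hin, rfl⟩ | ⟨i, hi, rfl⟩)
    · simp only [map_mul, map_inv, FreeGroup.lift_apply_of]
      rw [mul_inv_eq_one, mul_inv_eq_iff_eq_mul, adjacent, adjacent, dif_pos (by lia),
        dif_pos (by lia)]
      exact hg.disjoint i.lt_add_one hij j.lt_add_one
    · simp only [map_mul, map_inv, FreeGroup.lift_apply_of]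
      rw [mul_inv_eq_one, adjacent, adjacent, dif_pos (by lia), dif_pos (by lia)]
      have hl := hg.slide_left (i := ⟨i, hi, by lia⟩) (j := ⟨i + 1, by lia, by lia⟩)
        (k := ⟨i + 2, by lia, by lia⟩) i.lt_add_one (i + 1).lt_add_one
      have hr := hg.slide_right (i := ⟨i, hi, by lia⟩) (j := ⟨i + 1, by lia, by lia⟩)
        (k := ⟨i + 2, by lia, by lia⟩) i.lt_add_one (i + 1).lt_add_one
      rw [mul_assoc, hl, ← mul_assoc, hr]
      exact congrArg (· * _) hl
    · rw [FreeGroup.lift_apply_of, adjacent, dif_neg (by lia)]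

theorem lift_genσ (hg : IsBandFamily g) (i : ℕ) : lift hg (genσ n i) = adjacent g i :=
  PresentedGroup.toGroup.of _

theorem lift_band (hg : IsBandFamily g) {i j : Set.Icc 1 n} (hij : i < j) :
    lift hg (band n i j) = g i j := by
  obtain ⟨i, hi⟩ := i
  obtain ⟨j, hj⟩ := j
  replace hij : i < j := hij
  dsimp only
  induction j, hij using Nat.le_induction with
  | base =>
    rw [band_add_one, lift_genσ, adjacent, dif_pos ⟨hi.1, hj.2⟩]
  | succ j hij ih =>
    have hj' : j ∈ Set.Icc 1 n := ⟨hi.1.trans (Nat.le_of_lt hij), j.le_succ.trans hj.2⟩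
    rw [band_succ hij, map_mul, map_mul, map_inv, ih hj', lift_genσ, adjacent,
      dif_pos ⟨hj'.1, hj.2⟩, mul_inv_eq_iff_eq_mul]
    exact hg.slide_left (i := ⟨i, hi⟩) (j := ⟨j, hj'⟩) hij j.lt_add_one

end Lift

variable (n) in
/-- The homomorphism sending the chord `(i, j)` to the band generator `a_{i,j}`. -/
def ofChord : ChordMonoid (Set.Icc 1 n) →* Braid n := (isBandFamily_band n).lift

theorem ofChord_of (c : Chord (Set.Icc 1 n)) :
    ofChord n ((Chord.leftComplement _).of c) = band n c.1.1 c.1.2 :=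
  (isBandFamily_band n).lift_of c

theorem ofChord_injective : Function.Injective (ofChord n) := by
  obtain ⟨G, _, ι, hι⟩ := ChordMonoid.exists_injective_monoidHom_group (Set.Icc 1 n)
  have hg := ChordMonoid.isBandFamily_chord.map ι
  have h : (lift hg).comp (ofChord n) = ι := ChordMonoid.hom_ext fun i j hij ↦ by
    rw [MonoidHom.comp_apply, ofChord, (isBandFamily_band n).lift_chord hij, lift_band hg hij]
  exact Function.Injective.of_comp (f := lift hg) (by rwa [← MonoidHom.coe_comp, h])

theorem dualMonoidOn_eq_map (I : Set ℕ) : dualMonoidOn n I =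
    ((Chord.leftComplement _).parabolic (Chord.within ((↑) ⁻¹' I))).map (ofChord n) := by
  rw [LeftComplement.parabolic, MonoidHom.map_mclosure, dualMonoidOn]
  congr 1
  ext x
  constructor
  · rintro ⟨i, j, hiI, hjI, hi, hij, hj, rfl⟩
    let c : Chord (Set.Icc 1 n) :=
      ⟨(⟨i, hi, hij.le.trans hj⟩, ⟨j, hi.trans hij.le, hj⟩), hij⟩
    exact ⟨_, ⟨c, ⟨hiI, hjI⟩, rfl⟩, ofChord_of c⟩
  · rintro ⟨_, ⟨c, ⟨hiI, hjI⟩, rfl⟩, rfl⟩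
    exact ⟨_, _, hiI, hjI, c.1.1.2.1, c.2, c.1.2.2.2, ofChord_of c⟩

theorem dualMonoid_eq_map_top : dualMonoid n = (⊤ : Submonoid _).map (ofChord n) := by
  have hwithin : Chord.within (Set.univ : Set (Set.Icc 1 n)) = Set.univ := by simp [Chord.within]
  have huniv : dualMonoid n = dualMonoidOn n Set.univ := by simp [dualMonoid, dualMonoidOn]
  rw [huniv, dualMonoidOn_eq_map, Set.preimage_univ, hwithin,
    LeftComplement.parabolic_univ]

end Braid

/-- Theorem (existence and uniqueness of the maximal right divisor): for every
`β ∈ B_n^{+*}` and `I ⊆ {1,…,n}`, there is a unique `β' ∈ B_I^{+*}` with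
`β β'⁻¹ ∈ B_n^{+*}` such that every `β'' ∈ B_I^{+*}` with `β β''⁻¹ ∈ B_n^{+*}`
satisfies `β' β''⁻¹ ∈ B_I^{+*}`. -/
theorem maximal_right_divisor (n : ℕ) (hn : 2 ≤ n) (β : Braid n) (hβ : β ∈ dualMonoid n)
    (I : Set ℕ) (hI : I ⊆ Set.Icc 1 n) :
    ∃! β' : Braid n, β' ∈ dualMonoidOn n I ∧ β * β'⁻¹ ∈ dualMonoid n ∧
      ∀ β'' ∈ dualMonoidOn n I, β * β''⁻¹ ∈ dualMonoid n →
        β' * β''⁻¹ ∈ dualMonoidOn n I := by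
  have hdvd {P : Submonoid (ChordMonoid (Set.Icc 1 n))} {b x : ChordMonoid (Set.Icc 1 n)} :
      Braid.ofChord n b * (Braid.ofChord n x)⁻¹ ∈ P.map (Braid.ofChord n) ↔ ∃ c ∈ P, b = c * x :=
    map_mul_inv_mem_map_iff Braid.ofChord_injective
  rw [Braid.dualMonoid_eq_map_top] at hβ ⊢
  rw [Braid.dualMonoidOn_eq_map]
  obtain ⟨b, -, rfl⟩ := hβ
  obtain ⟨x, ⟨hx, hxb, hmax⟩, huniq⟩ := LeftComplement.existsUnique_maximal_right_divisor
    Chord.hasLcmOn_univ (K := Chord.within ((↑) ⁻¹' I)) Chord.mem_within_of_mem_compl b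
  refine ⟨Braid.ofChord n x, ⟨⟨x, hx, rfl⟩, hdvd.mpr (by simpa using hxb), ?_⟩, ?_⟩
  · rintro _ ⟨y, hy, rfl⟩ hyb
    exact hdvd.mpr (hmax y hy (by simpa using hdvd.mp hyb))
  · rintro _ ⟨⟨y, hy, rfl⟩, hyb, hymax⟩
    refine congrArg _ (huniq y ⟨hy, by simpa using hdvd.mp hyb, fun z hz hzb ↦ ?_⟩)
    exact hdvd.mp (hymax _ ⟨z, hz, rfl⟩ (hdvd.mpr (by simpa using hzb)))
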